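/- The triple of vincular statistics (\underline{31}2, 2\underline{13}, 2\underline{31}) is equidistributed with (\underline{31}2, 2\underline{31}, 2\underline{13}) on S_n; i.e., the generating polynomial P_n restricted by setting p = 1 is symmetric in its last two variables: ∑_{σ∈S_n} q^{31̲2(σ)} r^{213̲(σ)} s^{231̲(σ)} = ∑_{σ∈S_n} q^{31̲2(σ)} r^{231̲(σ)} s^{213̲(σ)}. -/

import Mathlib

/-
Build a permutation by inserting its letters in increasing order into a word whose placeholders
stand for the blocks of letters still to come. Inserting a letter into a placeholder with `i`
others to its left and `m` to its right creates `i` occurrences of `\underline{31}2`, `m` of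
`2\underline{13}` and, up to a correction by at most one, `m` of `2\underline{31}`, so that only
the number of placeholders and whether the word ends with one matter. The insertion of the last
letter of the permutation cuts the history into two lattice paths which meet at some height `g`.
The second path is read backwards, that is, the transfer matrix of its steps is transposed; then
both parts are counted by the same path weights, with `r` and `s` exchanged, and the sum over all
ways to divide the remaining letters between them is symmetric.
-/

namespace Paper

variable {n : ℕ}

/-- The 1-based position corresponding to `i : Fin n`. -/
def pv (i : Fin n) : ℕ := (i : ℕ) + 1

/-- The 1-based letter of the word `f` at 1-based position `k` (0 if out of range). -/
def valAt (f : Fin n → Fin n) (k : ℕ) : ℕ :=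
  if h : 1 ≤ k ∧ k ≤ n then ((f ⟨k - 1, by omega⟩ : Fin n) : ℕ) + 1 else 0

/-- The map θ̂ : the 1-based `i`-th letter of `hatTheta f` is `σ̂_{n+1-i}`,
where `σ̂ₐ = n - a` (1-based) if `a < n` and `n̂ = n`. (0-based encoding.) -/
def hatTheta (f : Fin n → Fin n) (i : Fin n) : Fin n :=
  if ((f i.rev : ℕ)) = n - 1 then f i.rev
  else ⟨n - 2 - (f i.rev : ℕ), by have := i.isLt; omega⟩

end Paper

namespace Paper

variable {n : ℕ}

/-- 2\underline{13}(σ) = #{(ℓ,j) : σ⁻¹(ℓ) < j < n, σⱼ < ℓ < σ_{j+1}} (1-based). -/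
def stat2_13 (σ : Equiv.Perm (Fin n)) : ℕ :=
  (Finset.univ.filter (fun p : Fin n × Fin n =>
    pv (σ.symm p.1) < pv p.2 ∧ pv p.2 < n ∧
    valAt ⇑σ (pv p.2) < pv p.1 ∧ pv p.1 < valAt ⇑σ (pv p.2 + 1))).card

/-- 2\underline{31}(σ) = #{(ℓ,j) : σ⁻¹(ℓ) < j < n, σ_{j+1} < ℓ < σⱼ} (1-based). -/
def stat2_31 (σ : Equiv.Perm (Fin n)) : ℕ :=
  (Finset.univ.filter (fun p : Fin n × Fin n =>
    pv (σ.symm p.1) < pv p.2 ∧ pv p.2 < n ∧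
    valAt ⇑σ (pv p.2 + 1) < pv p.1 ∧ pv p.1 < valAt ⇑σ (pv p.2))).card

/-- \underline{31}2(σ) = #{(ℓ,j) : 1 < j < σ⁻¹(ℓ), σⱼ < ℓ < σ_{j-1}} (1-based). -/
def stat31_2 (σ : Equiv.Perm (Fin n)) : ℕ :=
  (Finset.univ.filter (fun p : Fin n × Fin n =>
    1 < pv p.2 ∧ pv p.2 < pv (σ.symm p.1) ∧
    valAt ⇑σ (pv p.2) < pv p.1 ∧ pv p.1 < valAt ⇑σ (pv p.2 - 1))).card

/-- \underline{13}2(σ) = #{(ℓ,j) : 1 < j < σ⁻¹(ℓ), σ_{j-1} < ℓ < σⱼ} (1-based). -/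
def stat13_2 (σ : Equiv.Perm (Fin n)) : ℕ :=
  (Finset.univ.filter (fun p : Fin n × Fin n =>
    1 < pv p.2 ∧ pv p.2 < pv (σ.symm p.1) ∧
    valAt ⇑σ (pv p.2 - 1) < pv p.1 ∧ pv p.1 < valAt ⇑σ (pv p.2))).card

end Paper

namespace Paper

section LatticePaths

open Finset

variable {R : Type*} [CommSemiring R]

/-- The `(q, t)`-integer `[m] = q ^ (m - 1) + q ^ (m - 2) * t + ⋯ + t ^ (m - 1)`. -/
def qtInt (q t : R) (m : ℕ) : R :=
  ∑ i ∈ range m, q ^ i * t ^ (m - 1 - i)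

@[simp]
theorem qtInt_zero (q t : R) : qtInt q t 0 = 0 := by
  simp [qtInt]

theorem qtInt_succ (q t : R) (m : ℕ) : qtInt q t (m + 1) = t * qtInt q t m + q ^ m := by
  rw [qtInt, sum_range_succ, qtInt, mul_sum]
  congr 1
  · refine sum_congr rfl fun i hi => ?_
    have : m + 1 - 1 - i = m - 1 - i + 1 := by have := mem_range.1 hi; omega
    rw [this, pow_succ]
    ring
  · simp

/-- The total weight of the lattice paths with `j` steps from height `0` to height `g`, where from
height `g` an up step weighs `[g + 1]`, a level step `[g + 1] + s * [g]` and a down step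
`s * [g]`. -/
def pathWeight (q t s : R) : ℕ → ℕ → R
  | 0, g => if g = 0 then 1 else 0
  | j + 1, g => qtInt q t g * pathWeight q t s j (g - 1)
      + (qtInt q t (g + 1) + s * qtInt q t g) * pathWeight q t s j g
      + s * qtInt q t (g + 1) * pathWeight q t s j (g + 1)

/-- The operator which prepends a step of the paths counted by `pathWeight`: if `h g` is the total
weight of some paths starting at height `g`, the new paths starting there weigh
`pathStep q t s h g`. -/
def pathStep (q t s : R) (h : ℕ → R) (g : ℕ) : R :=
  qtInt q t (g + 1) * h (g + 1) + (qtInt q t (g + 1) + s * qtInt q t g) * h g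
    + s * (qtInt q t g * h (g - 1))

theorem pathWeight_eq_zero (q t s : R) {j g : ℕ} (hg : j < g) : pathWeight q t s j g = 0 := by
  induction j generalizing g with
  | zero => simp [pathWeight, hg.ne']
  | succ j ih =>
    rw [pathWeight, ih (by omega : j < g - 1), ih (by omega : j < g), ih (by omega : j < g + 1)]
    simp

/-- The recursions defining `pathWeight` and `pathStep` have transposed matrices. -/
theorem sum_pathWeight_mul_pathStep (q t s : R) (h : ℕ → R) {j N : ℕ} (hj : j < N) :
    ∑ g ∈ range (N + 1), pathWeight q t s j g * pathStep q t s h g =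
      ∑ g ∈ range (N + 1), pathWeight q t s (j + 1) g * h g := by
  have hN : pathWeight q t s j N = 0 := pathWeight_eq_zero q t s hj
  have hN' : pathWeight q t s j (N + 1) = 0 := pathWeight_eq_zero q t s (by omega)
  have hup : ∑ g ∈ range (N + 1), qtInt q t g * pathWeight q t s j (g - 1) * h g =
      ∑ g ∈ range (N + 1), pathWeight q t s j g * (qtInt q t (g + 1) * h (g + 1)) := by
    rw [sum_range_succ', sum_range_succ]
    simp [hN, mul_comm, mul_left_comm]
  have hdown : ∑ g ∈ range (N + 1),
        s * qtInt q t (g + 1) * pathWeight q t s j (g + 1) * h g =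
      ∑ g ∈ range (N + 1), pathWeight q t s j g * (s * (qtInt q t g * h (g - 1))) := by
    rw [sum_range_succ, sum_range_succ']
    simp [hN', mul_comm, mul_left_comm]
  simp only [pathWeight, pathStep, add_mul, mul_add, sum_add_distrib] at hup hdown ⊢
  rw [hup, hdown]
  simp only [mul_comm, mul_left_comm]

end LatticePaths

section Completions

open Finset

variable {R : Type*} [CommSemiring R]

/-- Whether a partial word ends with a placeholder, after the placeholder with `k` others to its
right has been replaced by a block which ends with a placeholder iff `b` holds; `e` tells whether
the word ended with a placeholder before. -/
def endsAfterFill (e : Bool) (k : ℕ) (b : Bool) : Bool :=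
  if e = true ∧ k = 0 then b else e

/-- The total weight of the ways to insert `j` further letters into a partial word with `m`
placeholders, leaving no placeholder, where `e` tells whether the word ends with one. A letter
goes into the placeholder with `i` others to its left, and the Booleans `a` and `b` tell whether a
placeholder is kept on its left and on its right. The subtractions in the exponents never
truncate. -/
def completionWeight (q r s : R) : ℕ → ℕ → Bool → R
  | 0, m, _ => if m = 0 then 1 else 0
  | j + 1, m, e => ∑ i ∈ range m, ∑ a : Bool, ∑ b : Bool,
      q ^ i * r ^ (m - 1 - i) *
        s ^ (m - 1 - i + b.toNat - (endsAfterFill e (m - 1 - i) b).toNat) *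
        completionWeight q r s j (m - 1 + a.toNat + b.toNat) (endsAfterFill e (m - 1 - i) b)

theorem completionWeight_succ_succ_false (q r s : R) (j m : ℕ) :
    completionWeight q r s (j + 1) (m + 1) false = qtInt q (r * s) (m + 1) *
      (completionWeight q r s j m false + completionWeight q r s j (m + 1) false
        + s * (completionWeight q r s j (m + 1) false
          + completionWeight q r s j (m + 2) false)) := by
  rw [completionWeight, qtInt, sum_mul]
  refine sum_congr rfl fun i _ => ?_
  simp [endsAfterFill, mul_pow, pow_succ]
  ring

theorem completionWeight_false_add_succ (q r s : R) (j g : ℕ) :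
    completionWeight q r s j g false + completionWeight q r s j (g + 1) false =
      pathWeight q (r * s) s j g := by
  induction j generalizing g with
  | zero => simp [completionWeight, pathWeight]
  | succ j ih =>
    rw [completionWeight_succ_succ_false, ih, ih, pathWeight]
    cases g with
    | zero => simp [completionWeight]; ring
    | succ g =>
      rw [completionWeight_succ_succ_false, ih, ih, Nat.add_sub_cancel]
      ring

/-- The first summand accounts for the letters that leave a placeholder at the end of the word,
the second one for the letters that become its last letter. -/
theorem completionWeight_succ_succ_true (q r s : R) (j g : ℕ) :
    completionWeight q r s (j + 1) (g + 1) true =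
      pathStep q (r * s) r (fun g => completionWeight q r s j (g + 1) true) g
        + q ^ g * pathWeight q (r * s) s j g := by
  have hinner : ∀ i ∈ range g, (∑ a : Bool, ∑ b : Bool, q ^ i * r ^ (g - i) *
        s ^ (g - i + b.toNat - (endsAfterFill true (g - i) b).toNat) *
        completionWeight q r s j (g + a.toNat + b.toNat) (endsAfterFill true (g - i) b)) =
      q ^ i * (r * s) ^ (g - 1 - i) *
        (r * s * (completionWeight q r s j (g + 1) true + completionWeight q r s j (g + 2) true)
          + r * (completionWeight q r s j g true + completionWeight q r s j (g + 1) true)) := by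
    intro i hi
    obtain ⟨d, rfl⟩ := Nat.exists_eq_add_of_lt (mem_range.1 hi)
    have hd : i + d + 1 - i = d + 1 := by omega
    simp [hd, endsAfterFill, mul_pow, pow_succ]
    ring
  have hlower : qtInt q (r * s) g * completionWeight q r s j (g - 1 + 1) true =
      qtInt q (r * s) g * completionWeight q r s j g true := by
    cases g <;> simp
  rw [completionWeight, sum_range_succ, Nat.add_sub_cancel, sum_congr rfl hinner,
    ← sum_mul, ← qtInt, pathStep, hlower, qtInt_succ,
    ← completionWeight_false_add_succ]
  simp [endsAfterFill]
  ring

theorem sum_pathWeight_mul_completionWeight_true (q r s : R) {j k N : ℕ} (hN : k + j < N) :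
    ∑ g ∈ range (N + 1),
        pathWeight q (r * s) r k g * completionWeight q r s (j + 1) (g + 1) true =
      ∑ p ∈ antidiagonal j, ∑ g ∈ range (N + 1),
        q ^ g * (pathWeight q (r * s) r (k + p.1) g * pathWeight q (r * s) s p.2 g) := by
  have hstep {j k : ℕ} (hk : k < N) : ∑ g ∈ range (N + 1),
        pathWeight q (r * s) r k g * completionWeight q r s (j + 1) (g + 1) true =
      ∑ g ∈ range (N + 1),
          pathWeight q (r * s) r (k + 1) g * completionWeight q r s j (g + 1) true +
        ∑ g ∈ range (N + 1),
          q ^ g * (pathWeight q (r * s) r k g * pathWeight q (r * s) s j g) := by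
    simp only [completionWeight_succ_succ_true, mul_add, sum_add_distrib,
      sum_pathWeight_mul_pathStep q (r * s) r _ hk, mul_left_comm]
  induction j generalizing k with
  | zero =>
    rw [hstep (by omega)]
    simp [completionWeight]
  | succ j ih =>
    rw [hstep (by omega), ih (by omega), Finset.Nat.sum_antidiagonal_succ, add_comm]
    simp only [Nat.add_zero, Nat.add_assoc, Nat.add_comm 1]

/-- In the summand `(l, l')`, the number of letters inserted before the last letter of the
permutation is `l`, and the number of those inserted after it is `l'`. -/
theorem completionWeight_succ_one_true (q r s : R) (n : ℕ) :
    completionWeight q r s (n + 1) 1 true =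
      ∑ p ∈ antidiagonal n, ∑ g ∈ range (n + 2),
        q ^ g * (pathWeight q (r * s) r p.1 g * pathWeight q (r * s) s p.2 g) := by
  simpa [pathWeight] using
    sum_pathWeight_mul_completionWeight_true q r s (j := n) (k := 0) (N := n + 1) (by omega)

theorem completionWeight_succ_one_true_comm (q r s : R) (n : ℕ) :
    completionWeight q r s (n + 1) 1 true = completionWeight q s r (n + 1) 1 true := by
  rw [completionWeight_succ_one_true, completionWeight_succ_one_true,
    ← Finset.Nat.sum_antidiagonal_swap, mul_comm s r]
  simp only [Prod.fst_swap, Prod.snd_swap, mul_comm (pathWeight q (r * s) r _ _)]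

end Completions

section Vincular

variable {α : Type*} (r : α → α → Prop) [DecidableRel r]

/-- The number of pairs `a b` of adjacent letters of a word with `c` in between: `r a c` and
`r c b`. -/
def crossings (c : α) : List α → ℕ
  | a :: b :: l => (if r a c ∧ r c b then 1 else 0) + crossings c (b :: l)
  | _ => 0

/-- The number of occurrences in a word of the vincular pattern `2\underline{13}` if `r` is `<`,
of `2\underline{31}` if `r` is `>`. -/
def vincular : List α → ℕ
  | [] => 0
  | c :: l => crossings r c l + vincular l

@[simp]
theorem crossings_nil (c : α) : crossings r c [] = 0 := rfl

@[simp]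
theorem crossings_singleton (c a : α) : crossings r c [a] = 0 := rfl

theorem crossings_cons_cons (c a b : α) (l : List α) :
    crossings r c (a :: b :: l) = (if r a c ∧ r c b then 1 else 0) + crossings r c (b :: l) := rfl

theorem crossings_append_cons (c a : α) (u v : List α) :
    crossings r c (u ++ a :: v) = crossings r c (u ++ [a]) + crossings r c (a :: v) := by
  induction u with
  | nil => simp
  | cons b u ih => cases u <;> simp_all [crossings_cons_cons, Nat.add_assoc]

theorem crossings_eq_zero {c : α} {l : List α} (h : ∀ a ∈ l, ∀ b ∈ l, ¬(r a c ∧ r c b)) :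
    crossings r c l = 0 := by
  induction l with
  | nil => rfl
  | cons a l ih =>
    cases l with
    | nil => rfl
    | cons b l =>
      rw [crossings_cons_cons, if_neg (h a (by simp) b (by simp)), Nat.zero_add]
      exact ih fun x hx y hy => h x (.tail _ hx) y (.tail _ hy)

theorem crossings_cons_congr {c a b : α} (h : r a c ↔ r b c) (v : List α) :
    crossings r c (a :: v) = crossings r c (b :: v) := by
  cases v <;> simp [crossings_cons_cons, h]

theorem crossings_concat_congr {c a b : α} (h : r c a ↔ r c b) (u : List α) :
    crossings r c (u ++ [a]) = crossings r c (u ++ [b]) := by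
  induction u with
  | nil => rfl
  | cons d u ih => cases u <;> simp_all [crossings_cons_cons]

theorem crossings_append_append {c d : α} {x : List α} (hx : x ≠ [])
    (h : ∀ a ∈ x, (r a c ↔ r d c) ∧ (r c a ↔ r c d)) (hd : ¬(r d c ∧ r c d)) (u v : List α) :
    crossings r c (u ++ (x ++ v)) = crossings r c (u ++ d :: v) := by
  obtain ⟨a, x, rfl⟩ := List.exists_cons_of_ne_nil hx
  have hblock : crossings r c (a :: (x ++ v)) = crossings r c (d :: v) := by
    induction x generalizing a with
    | nil => exact crossings_cons_congr r (h a (by simp)).1 v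
    | cons b x ih =>
      have hab : ¬(r a c ∧ r c b) := by rwa [(h a (by simp)).1, (h b (by simp)).2]
      rw [List.cons_append, crossings_cons_cons, if_neg hab, Nat.zero_add]
      exact ih b (by simp) fun y hy => h y (.tail _ hy)
  rw [List.cons_append, crossings_append_cons, hblock,
    crossings_concat_congr r (h a (by simp)).2, ← crossings_append_cons]

theorem crossings_reverse (c : α) (l : List α) :
    crossings r c l.reverse = crossings (fun a b => r b a) c l := by
  induction l with
  | nil => rfl
  | cons a l ih =>
    cases l with
    | nil => rfl
    | cons b l =>
      rw [List.reverse_cons, List.reverse_cons, List.append_assoc, List.singleton_append,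
        crossings_append_cons, ← List.reverse_cons, ih]
      simp [crossings_cons_cons, and_comm, Nat.add_comm]

theorem vincular_append_congr {u x y : List α}
    (h : ∀ c ∈ u, ∀ u', u' ⊆ u → crossings r c (u' ++ x) = crossings r c (u' ++ y)) :
    vincular r (u ++ x) + vincular r y = vincular r (u ++ y) + vincular r x := by
  induction u with
  | nil => simp [Nat.add_comm]
  | cons c u ih =>
    have hc := h c (by simp) u (by simp)
    have ih := ih fun d hd u' hu' =>
      h d (.tail _ hd) u' (List.Subset.trans hu' (List.subset_cons_self c u))
    simp only [List.cons_append, vincular]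
    omega

end Vincular

section Placeholders

variable {α : Type*} {N k : α} {u v w l : List α} {a b : Bool}

/-- No two adjacent letters of the word are equal to the placeholder `N`. -/
def Isolated (N : α) (w : List α) : Prop :=
  w.IsChain fun a b => ¬(a = N ∧ b = N)

/-- Whether the last letter of the word is the placeholder `N`. -/
def endsWith [DecidableEq α] (N : α) (w : List α) : Bool :=
  decide (w.getLast? = some N)

/-- The result of inserting the letter `k` into the placeholder of `u ++ N :: v` between `u` and
`v`, where a placeholder is kept to its left if `a` holds and to its right if `b` holds. -/
def fill (N k : α) (u v : List α) (a b : Bool) : List α :=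
  (u ++ List.replicate a.toNat N) ++ k :: (List.replicate b.toNat N ++ v)

theorem reverse_fill (N k : α) (u v : List α) (a b : Bool) :
    (fill N k u v a b).reverse = fill N k v.reverse u.reverse b a := by
  simp [fill]

theorem isolated_reverse : Isolated N l.reverse ↔ Isolated N l := by
  simp only [Isolated, List.isChain_reverse, and_comm]

theorem isolated_append_placeholder : Isolated N (u ++ N :: v) ↔
    (Isolated N u ∧ u.getLast? ≠ some N) ∧ Isolated N v ∧ v.head? ≠ some N := by
  rw [Isolated, List.isChain_append, List.isChain_cons]
  simp only [Isolated, List.head?_cons, ne_eq, Option.mem_def, Option.some.injEq]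
  grind

theorem isolated_append_letter (hk : k ≠ N) :
    Isolated N (u ++ k :: v) ↔ Isolated N u ∧ Isolated N v := by
  rw [Isolated, List.isChain_append, List.isChain_cons]
  simp [Isolated, hk]

theorem isolated_replicate_append (hv : v.head? ≠ some N) :
    Isolated N (List.replicate b.toNat N ++ v) ↔ Isolated N v := by
  cases b
  · simp
  · simpa [hv, Isolated] using isolated_append_placeholder (N := N) (u := []) (v := v)

theorem isolated_append_replicate (hu : u.getLast? ≠ some N) :
    Isolated N (u ++ List.replicate a.toNat N) ↔ Isolated N u := by
  rw [← isolated_reverse, List.reverse_append, List.reverse_replicate,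
    isolated_replicate_append (by simpa using hu), isolated_reverse]

theorem Isolated.exists_eq_replicate_append (h : Isolated N w) :
    ∃ b : Bool, ∃ v, w = List.replicate b.toNat N ++ v ∧ v.head? ≠ some N := by
  by_cases hw : w.head? = some N
  · obtain ⟨v, rfl⟩ := List.head?_eq_some_iff.1 hw
    exact ⟨true, v, by simp, ((isolated_append_placeholder (u := [])).1 h).2.2⟩
  · exact ⟨false, w, by simp, hw⟩

theorem Isolated.exists_eq_append_replicate (h : Isolated N w) :
    ∃ a : Bool, ∃ u, w = u ++ List.replicate a.toNat N ∧ u.getLast? ≠ some N := by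
  obtain ⟨a, v, hw, hv⟩ := (isolated_reverse.2 h).exists_eq_replicate_append
  exact ⟨a, v.reverse, by simpa using congrArg List.reverse hw, by simpa using hv⟩

theorem replicate_append_inj {b' : Bool} {v' : List α} (hv : v.head? ≠ some N)
    (hv' : v'.head? ≠ some N)
    (h : List.replicate b.toNat N ++ v = List.replicate b'.toNat N ++ v') : b = b' ∧ v = v' := by
  cases b <;> cases b' <;> grind

theorem append_replicate_inj {a' : Bool} {u' : List α} (hu : u.getLast? ≠ some N)
    (hu' : u'.getLast? ≠ some N)
    (h : u ++ List.replicate a.toNat N = u' ++ List.replicate a'.toNat N) : a = a' ∧ u = u' := by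
  simpa using replicate_append_inj (N := N) (v := u.reverse) (v' := u'.reverse) (by simpa using hu)
    (by simpa using hu') (by simpa using congrArg List.reverse h)

theorem endsWith_append_letter [DecidableEq α] (hk : k ≠ N) :
    endsWith N (u ++ k :: v) = endsWith N v := by
  cases v using List.reverseRecOn <;> simp [endsWith, hk, List.getLast?_cons]

theorem endsWith_replicate_append [DecidableEq α] (N : α) (u v : List α) (b : Bool) :
    endsWith N (List.replicate b.toNat N ++ v) =
      endsAfterFill (endsWith N (u ++ N :: v)) (v.count N) b := by
  cases v using List.reverseRecOn with
  | nil => cases b <;> simp [endsWith, endsAfterFill]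
  | append_singleton v c =>
    by_cases hc : c = N <;>
      simp [endsWith, endsAfterFill, List.getLast?_append, List.getLast?_cons, hc]

section Statistics

variable [LinearOrder α]

theorem crossings_lt_add_ite (hk : k < N) (hl : ∀ a ∈ l, a < k ∨ a = N) (h : Isolated N l) :
    crossings (· < ·) k l + (if l.head? = some N then 1 else 0) = l.count N := by
  induction l with
  | nil => rfl
  | cons a l ih =>
    cases l with
    | nil => simp [List.count_singleton]
    | cons b l =>
      obtain ⟨hab, h⟩ := List.isChain_cons_cons.1 h
      have ih := ih (fun x hx => hl x (.tail _ hx)) h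
      have ha := hl a (by simp)
      have hb := hl b (by simp)
      rw [List.count_cons, ← ih, crossings_cons_cons]
      simp only [List.head?_cons, Option.some.injEq, beq_iff_eq]
      grind

theorem crossings_gt_add_endsWith (hk : k < N) (hl : ∀ a ∈ l, a < k ∨ a = N)
    (h : Isolated N l) : crossings (· > ·) k l + (endsWith N l).toNat = l.count N := by
  have hrev := crossings_lt_add_ite hk (l := l.reverse) (by simpa using hl) (isolated_reverse.2 h)
  rw [List.count_reverse, List.head?_reverse, crossings_reverse] at hrev
  rw [← hrev, endsWith]
  split_ifs with hN <;> simp [hN]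

variable {r : α → α → Prop} [DecidableRel r]

theorem crossings_eq_zero_of_forall_le (hr : r = (· < ·) ∨ r = (· > ·)) (hl : ∀ a ∈ l, a ≤ N) :
    crossings r N l = 0 := by
  refine crossings_eq_zero r fun a ha b hb => ?_
  rcases hr with rfl | rfl
  exacts [fun h => (hl b hb).not_gt h.2, fun h => (hl a ha).not_gt h.1]

theorem crossings_append_fill {c : α} (hr : r = (· < ·) ∨ r = (· > ·)) (hc : c < k) (hk : k < N) :
    crossings r c (fill N k u v a b) = crossings r c (u ++ N :: v) := by
  have hbig : ∀ x ∈ List.replicate a.toNat N ++ k :: List.replicate b.toNat N, c < x := by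
    simp only [List.mem_append, List.mem_cons, List.mem_replicate]
    rintro x (⟨-, rfl⟩ | rfl | ⟨-, rfl⟩)
    exacts [hc.trans hk, hc, hc.trans hk]
  have hN := hc.trans hk
  have hne : List.replicate a.toNat N ++ k :: List.replicate b.toNat N ≠ [] := by simp
  rcases hr with rfl | rfl
  all_goals
    simpa [fill] using crossings_append_append _ hne
      (fun x hx => by simp [hbig x hx, (hbig x hx).not_gt, hN, hN.not_gt]) (by simp [hN.le]) u v

theorem vincular_replicate_append (hr : r = (· < ·) ∨ r = (· > ·)) (hl : ∀ a ∈ l, a ≤ N)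
    (b : Bool) : vincular r (List.replicate b.toNat N ++ l) = vincular r l := by
  cases b <;> simp [vincular, crossings_eq_zero_of_forall_le hr hl]

theorem vincular_fill (hr : r = (· < ·) ∨ r = (· > ·)) (hk : k < N)
    (hu : ∀ x ∈ u, x < k ∨ x = N) (hv : ∀ x ∈ v, x < k ∨ x = N) :
    vincular r (fill N k u v a b) =
      vincular r (u ++ N :: v) + crossings r k (List.replicate b.toNat N ++ v) := by
  have hle {x : α} (hx : x < k ∨ x = N) : x ≤ N := hx.elim (fun h => (h.trans hk).le) Eq.le
  have hvN : ∀ x ∈ v, x ≤ N := fun x hx => hle (hv x hx)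
  have hfill (u' : List α) : fill N k u' v a b = u' ++ fill N k [] v a b := by simp [fill]
  -- A letter `c < k` of `u` cannot tell the inserted block from `N`, and `N` itself, the largest
  -- letter, never plays the role of the `2`.
  have hcong : ∀ c ∈ u, ∀ u', u' ⊆ u →
      crossings r c (u' ++ fill N k [] v a b) = crossings r c (u' ++ N :: v) := by
    intro c hc u' hu'
    rw [← hfill]
    rcases hu c hc with hck | rfl
    · exact crossings_append_fill hr hck hk
    · have hu'N : ∀ x ∈ u', x ≤ c := fun x hx => hle (hu x (hu' hx))
      rw [crossings_eq_zero_of_forall_le hr, crossings_eq_zero_of_forall_le hr]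
      · simpa [or_imp, forall_and] using ⟨hu'N, hvN⟩
      · simp only [fill, List.mem_append, List.mem_cons, List.mem_replicate]
        rintro x ((hx | ⟨-, rfl⟩) | rfl | ⟨-, rfl⟩ | hx)
        exacts [hu'N x hx, le_rfl, hk.le, le_rfl, hvN x hx]
  have hsplit := vincular_append_congr r hcong
  have hreplicate : vincular r (fill N k [] v a b) =
      crossings r k (List.replicate b.toNat N ++ v) + vincular r v := by
    rw [fill, List.nil_append, vincular_replicate_append hr, vincular,
      vincular_replicate_append hr hvN]
    simp only [List.mem_append, List.mem_cons, List.mem_replicate]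
    rintro x (rfl | ⟨-, rfl⟩ | hx)
    exacts [hk.le, le_rfl, hvN x hx]
  have hplaceholder : vincular r (N :: v) = vincular r v :=
    vincular_replicate_append hr hvN true
  rw [hfill]
  omega

theorem vincular_lt_fill (hk : k < N) (h : Isolated N (u ++ N :: v))
    (hu : ∀ x ∈ u, x < k ∨ x = N) (hv : ∀ x ∈ v, x < k ∨ x = N) :
    vincular (· < ·) (fill N k u v a b) = vincular (· < ·) (u ++ N :: v) + v.count N := by
  obtain ⟨-, hv_isolated, hv_head⟩ := isolated_append_placeholder.1 h
  have hcount := crossings_lt_add_ite hk (l := List.replicate b.toNat N ++ v)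
    (List.forall_mem_append.2 ⟨fun x hx => .inr (List.eq_of_mem_replicate hx), hv⟩)
    ((isolated_replicate_append hv_head).2 hv_isolated)
  rw [vincular_fill (.inl rfl) hk hu hv]
  cases b <;> simp_all

theorem vincular_gt_fill (hk : k < N) (h : Isolated N (u ++ N :: v))
    (hu : ∀ x ∈ u, x < k ∨ x = N) (hv : ∀ x ∈ v, x < k ∨ x = N) :
    vincular (· > ·) (fill N k u v a b) = vincular (· > ·) (u ++ N :: v) +
      (v.count N + b.toNat - (endsAfterFill (endsWith N (u ++ N :: v)) (v.count N) b).toNat) := by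
  obtain ⟨-, hv_isolated, hv_head⟩ := isolated_append_placeholder.1 h
  have hcount := crossings_gt_add_endsWith hk (l := List.replicate b.toNat N ++ v)
    (List.forall_mem_append.2 ⟨fun x hx => .inr (List.eq_of_mem_replicate hx), hv⟩)
    ((isolated_replicate_append hv_head).2 hv_isolated)
  rw [endsWith_replicate_append N u, List.count_append, List.count_replicate_self] at hcount
  rw [vincular_fill (.inr rfl) hk hu hv]
  omega

theorem vincular_lt_reverse_fill (hk : k < N) (h : Isolated N (u ++ N :: v))
    (hu : ∀ x ∈ u, x < k ∨ x = N) (hv : ∀ x ∈ v, x < k ∨ x = N) :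
    vincular (· < ·) (fill N k u v a b).reverse =
      vincular (· < ·) (u ++ N :: v).reverse + u.count N := by
  rw [reverse_fill, vincular_lt_fill hk _ (by simpa using hv) (by simpa using hu)]
  · simp
  · simpa using isolated_reverse.2 h

end Statistics

end Placeholders

section PartialWords

open Finset

/-- The shapes of permutations in which every maximal block of letters not less than `k` has been
replaced by a placeholder, which is encoded by the letter `N`. The number of placeholders is not
bounded by the number of letters that are missing. -/
structure IsPartialWord (N k : ℕ) (w : List ℕ) : Prop where
  isolated : Isolated N w
  ne_nil : w ≠ []
  filter_perm : (w.filter (· ≠ N)).Perm (List.range k)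

variable {N k : ℕ} {u v w : List ℕ} {a b : Bool}

theorem IsPartialWord.lt_or_eq (h : IsPartialWord N k w) {x : ℕ} (hx : x ∈ w) : x < k ∨ x = N := by
  by_cases hxN : x = N
  · exact .inr hxN
  · exact .inl (List.mem_range.1 (h.filter_perm.mem_iff.1 (by simp [hx, hxN])))

theorem isPartialWord_fill (hk : k < N) (hu : u.getLast? ≠ some N) (hv : v.head? ≠ some N) :
    IsPartialWord N (k + 1) (fill N k u v a b) ↔ IsPartialWord N k (u ++ N :: v) := by
  have hisolated : Isolated N (fill N k u v a b) ↔ Isolated N (u ++ N :: v) := by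
    rw [fill, isolated_append_letter hk.ne, isolated_append_replicate hu,
      isolated_replicate_append hv, isolated_append_placeholder]
    simp [hu, hv]
  have hfilter : (fill N k u v a b).filter (· ≠ N) = u.filter (· ≠ N) ++ k :: v.filter (· ≠ N) := by
    simp [fill, hk.ne]
  have hfilter' : (u ++ N :: v).filter (· ≠ N) = u.filter (· ≠ N) ++ v.filter (· ≠ N) := by simp
  have hperm : ((fill N k u v a b).filter (· ≠ N)).Perm (List.range (k + 1)) ↔
      ((u ++ N :: v).filter (· ≠ N)).Perm (List.range k) := by
    rw [hfilter, hfilter', List.range_succ, List.perm_middle.congr_left,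
      (List.perm_append_singleton k _).congr_right, List.perm_cons]
  exact ⟨fun h => ⟨hisolated.1 h.isolated, by simp, hperm.1 h.filter_perm⟩,
    fun h => ⟨hisolated.2 h.isolated, by simp [fill], hperm.2 h.filter_perm⟩⟩

theorem IsPartialWord.exists_eq_fill (hk : k < N) (h : IsPartialWord N (k + 1) w) :
    ∃ u v a b, w = fill N k u v a b ∧ IsPartialWord N k (u ++ N :: v) := by
  have hkw : k ∈ w := List.mem_of_mem_filter (h.filter_perm.mem_iff.2 (by simp))
  obtain ⟨x, y, rfl⟩ := List.append_of_mem hkw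
  obtain ⟨hx, hy⟩ := (isolated_append_letter hk.ne).1 h.isolated
  obtain ⟨a, u, rfl, hu⟩ := hx.exists_eq_append_replicate
  obtain ⟨b, v, rfl, hv⟩ := hy.exists_eq_replicate_append
  exact ⟨u, v, a, b, rfl, (isPartialWord_fill hk hu hv).1 h⟩

theorem IsPartialWord.notMem (hk : k < N) (h : IsPartialWord N k w) : k ∉ w :=
  fun hkw => (h.lt_or_eq hkw).elim (lt_irrefl k) hk.ne

theorem IsPartialWord.fill_inj {u' v' : List ℕ} {a' b' : Bool} (hk : k < N)
    (h : IsPartialWord N k (u ++ N :: v)) (h' : IsPartialWord N k (u' ++ N :: v'))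
    (heq : fill N k u v a b = fill N k u' v' a' b') : u = u' ∧ v = v' ∧ a = a' ∧ b = b' := by
  obtain ⟨⟨-, hu⟩, -, hv⟩ := isolated_append_placeholder.1 h.isolated
  obtain ⟨⟨-, hu'⟩, -, hv'⟩ := isolated_append_placeholder.1 h'.isolated
  have hkN : ∀ b : Bool, k ∉ List.replicate b.toNat N :=
    fun b hkb => hk.ne (List.eq_of_mem_replicate hkb)
  have hnot : k ∉ u ∧ k ∉ v := by simpa [hk.ne] using h.notMem hk
  obtain ⟨hleft, -, hright⟩ := (List.append_cons_inj_of_notMem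
    (by simp [hnot.1, hkN]) (by simp [hnot.2, hkN])).1 heq
  obtain ⟨rfl, rfl⟩ := append_replicate_inj hu hu' hleft
  obtain ⟨rfl, rfl⟩ := replicate_append_inj hv hv' hright
  exact ⟨rfl, rfl, rfl, rfl⟩

/-- The pairs `(u, v)` with `w = u ++ N :: v`, ordered by the length of `u`. -/
def splits (N : ℕ) : List ℕ → List (List ℕ × List ℕ)
  | [] => []
  | a :: w => (if a = N then [([], w)] else []) ++ (splits N w).map fun p => (a :: p.1, p.2)

theorem mem_splits {p : List ℕ × List ℕ} : p ∈ splits N w ↔ w = p.1 ++ N :: p.2 := by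
  obtain ⟨u, v⟩ := p
  induction w generalizing u with
  | nil => simp [splits]
  | cons a w ih => cases u <;> by_cases h : a = N <;> simp [splits, h, ih] <;> grind

theorem nodup_splits (N : ℕ) (w : List ℕ) : (splits N w).Nodup := by
  induction w with
  | nil => simp [splits]
  | cons a w ih =>
    have htail : ((splits N w).map fun p => (a :: p.1, p.2)).Nodup :=
      ih.map fun p p' h => by simpa [Prod.ext_iff] using h
    by_cases h : a = N <;> simp_all [splits]

theorem sum_map_splits {R : Type*} [AddCommMonoid R] (N : ℕ) (w : List ℕ) (f : ℕ → ℕ → R) :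
    ((splits N w).map fun p => f (p.1.count N) (p.2.count N)).sum =
      ∑ i ∈ range (w.count N), f i (w.count N - 1 - i) := by
  induction w generalizing f with
  | nil => simp [splits]
  | cons a w ih =>
    by_cases h : a = N
    · subst h
      have ih := ih fun i j => f (i + 1) j
      have hsub : ∀ i, w.count a + 1 - 1 - (i + 1) = w.count a - 1 - i := by omega
      rw [List.count_cons_self, sum_range_succ', sum_congr rfl fun i _ => by rw [hsub]]
      simp [splits, Function.comp_def, ih, add_comm]
    · simp [splits, h, Function.comp_def, List.count_cons_of_ne h, ih]

/-- The partial words with letters less than `k`. -/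
def partialWords (N : ℕ) : ℕ → Finset (List ℕ)
  | 0 => {[N]}
  | k + 1 => (((partialWords N k).biUnion fun w => (splits N w).toFinset) ×ˢ
      (univ : Finset (Bool × Bool))).image fun x => fill N k x.1.1 x.1.2 x.2.1 x.2.2

theorem isPartialWord_zero : IsPartialWord N 0 w ↔ w = [N] := by
  constructor
  · intro h
    have hN : ∀ x ∈ w, x = N := fun x hx => (h.lt_or_eq hx).resolve_left x.not_lt_zero
    rcases w with _ | ⟨x, _ | ⟨y, w⟩⟩
    · exact absurd rfl h.ne_nil
    · rw [hN x (by simp)]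
    · exact absurd ⟨hN x (by simp), hN y (by simp)⟩ (List.isChain_cons_cons.1 h.isolated).1
  · rintro rfl
    exact ⟨.singleton N, by simp, by simp⟩

theorem mem_partialWords (hk : k ≤ N) : w ∈ partialWords N k ↔ IsPartialWord N k w := by
  induction k generalizing w with
  | zero => rw [isPartialWord_zero, partialWords, mem_singleton]
  | succ k ih =>
    simp only [partialWords, mem_image, mem_product, mem_biUnion, List.mem_toFinset, mem_splits,
      mem_univ, and_true, exists_eq_right, ih (Nat.le_of_lt hk)]
    constructor
    · rintro ⟨⟨⟨u, v⟩, a, b⟩, h, rfl⟩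
      obtain ⟨⟨-, hu⟩, -, hv⟩ := isolated_append_placeholder.1 h.isolated
      exact (isPartialWord_fill hk hu hv).2 h
    · intro h
      obtain ⟨u, v, a, b, rfl, huv⟩ := h.exists_eq_fill hk
      exact ⟨((u, v), a, b), huv, rfl⟩

theorem sum_partialWords_succ {R : Type*} [AddCommMonoid R] (hk : k < N) (f : List ℕ → R) :
    ∑ w ∈ partialWords N (k + 1), f w = ∑ w ∈ partialWords N k,
      ((splits N w).map fun p => ∑ a : Bool, ∑ b : Bool, f (fill N k p.1 p.2 a b)).sum := by
  rw [partialWords, sum_image, sum_product, sum_biUnion]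
  · refine sum_congr rfl fun w _ => ?_
    simp only [List.sum_toFinset _ (nodup_splits N w), Fintype.sum_prod_type]
  · intro w _ w' _ hne
    refine Finset.disjoint_left.2 fun p hp hp' => hne ?_
    rw [mem_splits.1 (List.mem_toFinset.1 hp), mem_splits.1 (List.mem_toFinset.1 hp')]
  · rintro ⟨⟨u, v⟩, a, b⟩ h ⟨⟨u', v'⟩, a', b'⟩ h' heq
    simp only [coe_product, Set.mem_prod, mem_coe, mem_biUnion, List.mem_toFinset, mem_splits,
      exists_eq_right, mem_partialWords hk.le] at h h'
    obtain ⟨rfl, rfl, rfl, rfl⟩ := h.1.fill_inj hk h'.1 heq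
    rfl

end PartialWords

section Weights

open Finset

variable {R : Type*} [CommSemiring R]

/-- The monomial recording the numbers of occurrences of `\underline{31}2`, `2\underline{13}` and
`2\underline{31}` in the word `w`; the first pattern is the reverse of the second one. -/
def weight (q r s : R) (w : List ℕ) : R :=
  q ^ vincular (· < ·) w.reverse * r ^ vincular (· < ·) w * s ^ vincular (· > ·) w

theorem weight_fill (q r s : R) {N k : ℕ} {u v : List ℕ} (hk : k < N)
    (h : IsPartialWord N k (u ++ N :: v)) (a b : Bool) :
    weight q r s (fill N k u v a b) =
      weight q r s (u ++ N :: v) * (q ^ u.count N * r ^ v.count N * s ^ (v.count N + b.toNat -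
        (endsAfterFill (endsWith N (u ++ N :: v)) (v.count N) b).toNat)) := by
  have hu : ∀ x ∈ u, x < k ∨ x = N := fun x hx => h.lt_or_eq (by simp [hx])
  have hv : ∀ x ∈ v, x < k ∨ x = N := fun x hx => h.lt_or_eq (by simp [hx])
  rw [weight, vincular_lt_reverse_fill hk h.isolated hu hv, vincular_lt_fill hk h.isolated hu hv,
    vincular_gt_fill hk h.isolated hu hv, weight, pow_add, pow_add, pow_add]
  ring

theorem count_fill {N k : ℕ} (hk : k < N) (u v : List ℕ) (a b : Bool) :
    (fill N k u v a b).count N = (u ++ N :: v).count N - 1 + a.toNat + b.toNat := by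
  simp [fill, hk.ne]
  omega

theorem sum_weight_mul_completionWeight_succ (q r s : R) {N k : ℕ} (hk : k < N) (j : ℕ) :
    ∑ w ∈ partialWords N (k + 1),
        weight q r s w * completionWeight q r s j (w.count N) (endsWith N w) =
      ∑ w ∈ partialWords N k,
        weight q r s w * completionWeight q r s (j + 1) (w.count N) (endsWith N w) := by
  rw [sum_partialWords_succ hk]
  refine sum_congr rfl fun w hw => ?_
  rw [completionWeight, ← sum_map_splits N w fun i m => ∑ a : Bool, ∑ b : Bool, q ^ i * r ^ m *
      s ^ (m + b.toNat - (endsAfterFill (endsWith N w) m b).toNat) *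
      completionWeight q r s j (w.count N - 1 + a.toNat + b.toNat)
        (endsAfterFill (endsWith N w) m b), ← List.sum_map_mul_left]
  refine congrArg List.sum (List.map_congr_left fun p hp => ?_)
  obtain rfl := mem_splits.1 hp
  simp only [mul_sum]
  refine sum_congr rfl fun a _ => sum_congr rfl fun b _ => ?_
  rw [weight_fill q r s hk ((mem_partialWords hk.le).1 hw), count_fill hk,
    ← endsWith_replicate_append, fill, endsWith_append_letter hk.ne, mul_assoc]

theorem sum_weight_mul_completionWeight (q r s : R) {N k : ℕ} (hk : k ≤ N) :
    ∑ w ∈ partialWords N k,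
        weight q r s w * completionWeight q r s (N - k) (w.count N) (endsWith N w) =
      completionWeight q r s N 1 true := by
  induction k with
  | zero => simp [partialWords, weight, vincular, endsWith]
  | succ k ih =>
    have hsub : N - k = N - (k + 1) + 1 := by omega
    rw [sum_weight_mul_completionWeight_succ q r s hk, ← hsub, ih (Nat.le_of_lt hk)]

theorem sum_weight_partialWords (q r s : R) (n : ℕ) :
    ∑ w ∈ partialWords n n with n ∉ w, weight q r s w = completionWeight q r s n 1 true := by
  rw [← sum_weight_mul_completionWeight q r s le_rfl, sum_filter]
  simp [completionWeight, List.count_eq_zero]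

end Weights

section Permutations

variable {n : ℕ}

/-- The word `σ₀, …, σₙ₋₁` of a permutation, with letters `0, …, n - 1`. -/
def word (σ : Equiv.Perm (Fin n)) : List ℕ :=
  List.ofFn fun i => (σ i : ℕ)

theorem word_injective : Function.Injective (word : Equiv.Perm (Fin n) → List ℕ) := fun _ _ h =>
  Equiv.ext fun i => Fin.ext (congrFun (List.ofFn_injective h) i)

theorem mem_word {σ : Equiv.Perm (Fin n)} {x : ℕ} : x ∈ word σ ↔ x < n := by
  rw [word, List.mem_ofFn']
  exact ⟨fun ⟨i, hi⟩ => hi ▸ (σ i).isLt, fun h => ⟨σ.symm ⟨x, h⟩, by simp⟩⟩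

theorem word_perm_range (σ : Equiv.Perm (Fin n)) : (word σ).Perm (List.range n) :=
  (List.perm_ext_iff_of_nodup (List.nodup_ofFn.2 (Fin.val_injective.comp σ.injective))
    List.nodup_range).2 fun _ => mem_word.trans List.mem_range.symm

theorem exists_word_eq {w : List ℕ} (h : w.Perm (List.range n)) :
    ∃ σ : Equiv.Perm (Fin n), word σ = w := by
  obtain rfl : w.length = n := by simpa using h.length_eq
  have hlt (i : Fin w.length) : w.get i < w.length := List.mem_range.1 (h.subset (w.get_mem i))
  have hinj : Function.Injective fun i => (⟨w.get i, hlt i⟩ : Fin w.length) := fun i j hij =>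
    (h.nodup_iff.2 List.nodup_range).injective_get (congrArg Fin.val hij)
  exact ⟨Equiv.ofBijective _ (Finite.injective_iff_bijective.1 hinj), List.ofFn_get w⟩

theorem word_reverse (σ : Equiv.Perm (Fin n)) : (word σ).reverse = word (Fin.revPerm.trans σ) := by
  refine List.ext_getElem (by simp [word]) fun i _ _ => ?_
  simp [word, Fin.rev, Nat.sub_sub, Nat.add_comm]

theorem crossings_ofFn {α : Type*} (r : α → α → Prop) [DecidableRel r] (c : α) (f : Fin n → α) :
    crossings r c (List.ofFn f) =
      ∑ j : Fin n, if ∃ h : (j : ℕ) + 1 < n, r (f j) c ∧ r c (f ⟨j + 1, h⟩) then 1 else 0 := by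
  induction n with
  | zero => simp
  | succ n ih =>
    cases n with
    | zero => exact (Finset.sum_eq_zero fun j _ => if_neg fun ⟨h, _⟩ => by omega).symm
    | succ n =>
      have htail := ih fun i => f i.succ
      rw [List.ofFn_succ] at htail
      rw [Fin.sum_univ_succ, List.ofFn_succ, List.ofFn_succ, crossings_cons_cons, htail]
      congr 1
      · exact if_congr (by simp) rfl rfl
      · exact Finset.sum_congr rfl fun j _ => if_congr (by simp) rfl rfl

theorem vincular_ofFn {α : Type*} (r : α → α → Prop) [DecidableRel r] (f : Fin n → α) :
    vincular r (List.ofFn f) = ∑ i : Fin n, ∑ j : Fin n,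
      if i < j ∧ ∃ h : (j : ℕ) + 1 < n, r (f j) (f i) ∧ r (f i) (f ⟨j + 1, h⟩) then 1 else 0 := by
  induction n with
  | zero => rfl
  | succ n ih =>
    rw [List.ofFn_succ, vincular, ih, crossings_ofFn, Fin.sum_univ_succ]
    congr 1
    · rw [Fin.sum_univ_succ, if_neg (by simp), Nat.zero_add]
      exact Finset.sum_congr rfl fun j _ => if_congr (by simp) rfl rfl
    · refine Finset.sum_congr rfl fun i _ => ?_
      rw [Fin.sum_univ_succ, if_neg (by simp), Nat.zero_add]
      exact Finset.sum_congr rfl fun j _ => if_congr (by simp) rfl rfl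

theorem valAt_succ (f : Fin n → Fin n) {j : ℕ} (h : j < n) : valAt f (j + 1) = f ⟨j, h⟩ + 1 := by
  simp [valAt, Nat.succ_le_of_lt h]

theorem stat2_13_eq_vincular (σ : Equiv.Perm (Fin n)) :
    stat2_13 σ = vincular (· < ·) (word σ) := by
  rw [word, vincular_ofFn, stat2_13, Finset.card_filter, Fintype.sum_prod_type,
    ← Equiv.sum_comp σ]
  refine Finset.sum_congr rfl fun i _ => Finset.sum_congr rfl fun j _ => if_congr ?_ rfl rfl
  by_cases h : (j : ℕ) + 1 < n <;> simp [pv, valAt_succ, h]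

theorem stat2_31_eq_vincular (σ : Equiv.Perm (Fin n)) :
    stat2_31 σ = vincular (· > ·) (word σ) := by
  rw [word, vincular_ofFn, stat2_31, Finset.card_filter, Fintype.sum_prod_type,
    ← Equiv.sum_comp σ]
  refine Finset.sum_congr rfl fun i _ => Finset.sum_congr rfl fun j _ => if_congr ?_ rfl rfl
  by_cases h : (j : ℕ) + 1 < n <;> simp [pv, valAt_succ, h, and_comm]

theorem pv_rev (i : Fin n) : pv i.rev = n + 1 - pv i := by
  simp only [pv, Fin.val_rev]
  omega

theorem valAt_comp_rev (f : Fin n → Fin n) (k : ℕ) :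
    valAt (fun i => f i.rev) k = valAt f (n + 1 - k) := by
  have hk : 1 ≤ k ∧ k ≤ n ↔ 1 ≤ n + 1 - k ∧ n + 1 - k ≤ n := by omega
  by_cases h : 1 ≤ k ∧ k ≤ n
  · rw [valAt, dif_pos h, valAt, dif_pos (hk.1 h)]
    congr 3
    ext
    simp only [Fin.val_rev]
    omega
  · rw [valAt, dif_neg h, valAt, dif_neg (mt hk.2 h)]

theorem stat31_2_eq_vincular_reverse (σ : Equiv.Perm (Fin n)) :
    stat31_2 σ = vincular (· < ·) (word σ).reverse := by
  rw [word_reverse, ← stat2_13_eq_vincular, stat31_2, stat2_13, Finset.card_filter,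
    Finset.card_filter, Fintype.sum_prod_type, Fintype.sum_prod_type]
  refine Finset.sum_congr rfl fun l _ => ?_
  rw [← Equiv.sum_comp Fin.revPerm]
  refine Finset.sum_congr rfl fun j _ => if_congr ?_ rfl rfl
  have hval (k : ℕ) : valAt (Fin.revPerm.trans σ) k = valAt σ (n + 1 - k) := valAt_comp_rev σ k
  have hsub : n + 1 - (pv j + 1) = n + 1 - pv j - 1 := by omega
  simp only [Fin.revPerm_apply, pv_rev, hval, hsub, Equiv.symm_trans_apply, Fin.revPerm_symm]
  have := j.isLt
  have := (σ.symm l).isLt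
  simp only [pv]
  omega

theorem filter_partialWords_eq_image_word (hn : n ≠ 0) :
    {w ∈ partialWords n n | n ∉ w} = Finset.univ.image (word (n := n)) := by
  ext w
  have hfilter (h : n ∉ w) : w.filter (· ≠ n) = w :=
    List.filter_eq_self.2 fun x hx => decide_eq_true (ne_of_mem_of_not_mem hx h)
  simp only [Finset.mem_filter, mem_partialWords le_rfl, Finset.mem_image, Finset.mem_univ,
    true_and]
  constructor
  · rintro ⟨h, hnw⟩
    exact exists_word_eq (hfilter hnw ▸ h.filter_perm)
  · rintro ⟨σ, rfl⟩
    have hnw : n ∉ word σ := fun h => lt_irrefl n (mem_word.1 h)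
    refine ⟨⟨?_, List.ne_nil_of_mem (mem_word.2 (Nat.pos_of_ne_zero hn)), ?_⟩, hnw⟩
    · exact List.isChain_iff_getElem.2 fun i hi h => hnw (List.mem_of_getElem h.1)
    · exact (hfilter hnw).symm ▸ word_perm_range σ

theorem sum_pow_stat_eq_completionWeight {R : Type*} [CommSemiring R] (q r s : R) (hn : n ≠ 0) :
    ∑ σ : Equiv.Perm (Fin n), q ^ stat31_2 σ * r ^ stat2_13 σ * s ^ stat2_31 σ =
      completionWeight q r s n 1 true := by
  rw [← sum_weight_partialWords, filter_partialWords_eq_image_word hn,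
    Finset.sum_image word_injective.injOn]
  simp only [weight, stat31_2_eq_vincular_reverse, stat2_13_eq_vincular, stat2_31_eq_vincular]

end Permutations

/-- (\underline{31}2, 2\underline{13}, 2\underline{31}) is equidistributed
with (\underline{31}2, 2\underline{31}, 2\underline{13}) on Sₙ. -/
theorem trivariate_symmetry (n : ℕ) (R : Type*) [CommSemiring R] (q r s : R) :
    ∑ σ : Equiv.Perm (Fin n), q ^ stat31_2 σ * r ^ stat2_13 σ * s ^ stat2_31 σ =
    ∑ σ : Equiv.Perm (Fin n), q ^ stat31_2 σ * r ^ stat2_31 σ * s ^ stat2_13 σ := by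
  cases n with
  | zero => simp [stat2_13, stat2_31]
  | succ n =>
    calc
      _ = completionWeight q r s (n + 1) 1 true :=
        sum_pow_stat_eq_completionWeight q r s n.succ_ne_zero
      _ = completionWeight q s r (n + 1) 1 true := completionWeight_succ_one_true_comm q r s n
      _ = ∑ σ : Equiv.Perm (Fin (n + 1)), q ^ stat31_2 σ * s ^ stat2_13 σ * r ^ stat2_31 σ :=
        (sum_pow_stat_eq_completionWeight q s r n.succ_ne_zero).symm
      _ = _ := Finset.sum_congr rfl fun _ _ => mul_right_comm ..

end Paper
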